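/- For fixed S ⪰ 0 and r ≤ p, the function on the positive orthant φ ↦ f(φ) = Σ_{i=1}^p (−log φ_i + s_{ii} φ_i) + Σ_{i=1}^r g(λ_i*(φ)), where λ_1*(φ) ≥ ⋯ ≥ λ_p*(φ) are the eigenvalues of Φ^{1/2} S Φ^{1/2} with Φ = diag(φ), can be written as f = f_1 − f_2 with f_1(φ) = Σ_i (−log φ_i + s_{ii} φ_i) convex and f_2(φ) = −Σ_{i=1}^r g(λ_i*(φ)) convex, where g(y)=log(max{1,y})−max{1,y}+1. -/

import Mathlib

namespace DcAux

/-- the convex function `-g` -/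
noncomputable def hh (y : ℝ) : ℝ := max 1 y - Real.log (max 1 y) - 1

lemma psi_mono {x y : ℝ} (hx : 1 ≤ x) (hxy : x ≤ y) :
    x - Real.log x - 1 ≤ y - Real.log y - 1 := by
  have hx0 : 0 < x := by linarith
  have hy0 : 0 < y := by linarith
  have h1 := Real.log_le_sub_one_of_pos (div_pos hy0 hx0)
  rw [Real.log_div hy0.ne' hx0.ne'] at h1
  have h2 : y / x - 1 ≤ y - x := by
    rw [div_sub_one hx0.ne', div_le_iff₀ hx0]
    nlinarith
  linarith

lemma hh_mono : Monotone hh := by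
  intro x y hxy
  exact psi_mono (le_max_left _ _) (max_le_max le_rfl hxy)

lemma hh_convex : ConvexOn ℝ Set.univ hh := by
  refine ⟨convex_univ, ?_⟩
  intro x _ y _ a b ha hb hab
  simp only [smul_eq_mul]
  have h1x : (1 : ℝ) ≤ max 1 x := le_max_left _ _
  have h1y : (1 : ℝ) ≤ max 1 y := le_max_left _ _
  have hle : max 1 (a * x + b * y) ≤ a * max 1 x + b * max 1 y := by
    apply max_le
    · nlinarith
    · exact add_le_add (mul_le_mul_of_nonneg_left (le_max_right _ _) ha)
        (mul_le_mul_of_nonneg_left (le_max_right _ _) hb)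
  have h1 := psi_mono (le_max_left 1 (a * x + b * y)) hle
  have h2 := strictConcaveOn_log_Ioi.concaveOn.2 (x := max 1 x) (y := max 1 y)
    (Set.mem_Ioi.2 (by linarith)) (Set.mem_Ioi.2 (by linarith)) ha hb hab
  simp only [smul_eq_mul] at h2
  unfold hh
  nlinarith

lemma weighted {p r : ℕ} (hr : r ≤ p) (c w : Fin p → ℝ) (hc : Antitone c)
    (h0 : ∀ j, 0 ≤ w j) (h1 : ∀ j, w j ≤ 1) (hs : ∑ j, w j = r) :
    ∑ j, w j * c j ≤ ∑ j ∈ Finset.univ.filter (fun i : Fin p => (i : ℕ) < r), c j := by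
  obtain ⟨t, ht⟩ : ∃ t : ℝ, ∀ j : Fin p, ((j : ℕ) < r → t ≤ c j) ∧ (¬ (j : ℕ) < r → c j ≤ t ∨ w j = 0) := by
    rcases Nat.eq_zero_or_pos r with h | h
    · subst h
      refine ⟨0, fun j => ⟨fun hj => by omega, fun _ => Or.inr ?_⟩⟩
      have := (Finset.sum_eq_zero_iff_of_nonneg (fun j _ => h0 j)).1 (by simpa using hs)
      exact this j (Finset.mem_univ j)
    · refine ⟨c ⟨r - 1, by omega⟩, fun j => ⟨fun hj => hc ?_, fun hj => Or.inl (hc ?_)⟩⟩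
      · rw [Fin.le_def]; simp; omega
      · rw [Fin.le_def]; simp; omega
  have hcard : ((Finset.univ.filter (fun i : Fin p => (i : ℕ) < r)).card : ℝ) = r := by
    rw [Fin.card_filter_val_lt]; simp [hr]
  have key : ∑ j, w j * (c j - t) ≤ ∑ j : Fin p, if (j : ℕ) < r then c j - t else 0 := by
    apply Finset.sum_le_sum
    intro j _
    split_ifs with hj
    · have := (ht j).1 hj
      nlinarith [h1 j]
    · rcases (ht j).2 hj with h | h
      · nlinarith [h0 j]
      · simp [h]
  rw [← Finset.sum_filter, Finset.sum_sub_distrib, Finset.sum_const, nsmul_eq_mul, hcard] at key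
  simp only [mul_sub, Finset.sum_sub_distrib, ← Finset.sum_mul, hs] at key
  linarith

lemma exists_perm {p : ℕ} (l e : Fin p → ℝ)
    (h : Multiset.map l Finset.univ.val = Multiset.map e Finset.univ.val) :
    ∃ σ : Equiv.Perm (Fin p), l = e ∘ σ := by
  rw [Fin.univ_val_map, Fin.univ_val_map, Multiset.coe_eq_coe] at h
  have hp : (List.ofFn (l ∘ Tuple.sort l)).Perm (List.ofFn (e ∘ Tuple.sort e)) :=
    ((Tuple.sort l).ofFn_comp_perm l).trans (h.trans ((Tuple.sort e).ofFn_comp_perm e).symm)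
  have h2 := List.ofFn_injective (hp.eq_of_sortedLE (Tuple.monotone_sort l).sortedLE_ofFn
    (Tuple.monotone_sort e).sortedLE_ofFn)
  refine ⟨(Tuple.sort l).symm.trans (Tuple.sort e), ?_⟩
  funext i
  simpa using congrFun h2 ((Tuple.sort l).symm i)

open Polynomial in
lemma diagonalize {p : ℕ} (A : Matrix (Fin p) (Fin p) ℝ) (hA : A.IsHermitian) (l : Fin p → ℝ)
    (hl : A.charpoly = ∏ i, (X - C (l i))) :
    ∃ U : Matrix (Fin p) (Fin p) ℝ, U * U.transpose = 1 ∧ U.transpose * U = 1 ∧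
      U.transpose * A * U = Matrix.diagonal l := by
  have h := hA.charpoly_eq
  rw [hl] at h
  have h2 := congrArg Polynomial.roots h
  simp only [RCLike.ofReal_real_eq_id, id] at h2
  have hne : ∀ f : Fin p → ℝ, (∏ i, (X - C (f i))).roots = Multiset.map f Finset.univ.val := by
    intro f
    rw [Polynomial.roots_prod]
    · simp
    · simp [Finset.prod_ne_zero_iff, Polynomial.X_sub_C_ne_zero]
  rw [hne, hne] at h2
  obtain ⟨σ, hσ⟩ := exists_perm _ _ h2
  obtain ⟨Q, hQ⟩ : ∃ Q : Matrix (Fin p) (Fin p) ℝ, Q = hA.eigenvectorUnitary := ⟨_, rfl⟩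
  have hQ1 : Q.transpose * Q = 1 := by
    have := Unitary.coe_star_mul_self hA.eigenvectorUnitary
    rw [← hQ, Matrix.star_eq_conjTranspose,
      Matrix.conjTranspose_eq_transpose_of_trivial] at this
    exact this
  have hQ2 : Q.transpose * A * Q = Matrix.diagonal hA.eigenvalues := by
    have := hA.conjStarAlgAut_star_eigenvectorUnitary
    rw [Unitary.conjStarAlgAut_star_apply, ← hQ, Matrix.star_eq_conjTranspose,
      Matrix.conjTranspose_eq_transpose_of_trivial] at this
    rw [this]; rfl
  have hR : (Q.submatrix id σ).transpose * Q.submatrix id σ = 1 := by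
    have := congrArg (fun M => M.submatrix σ σ) hQ1
    simp only [Matrix.submatrix_one_equiv] at this
    rw [← this]; rfl
  refine ⟨Q.submatrix id σ, mul_eq_one_comm.1 hR, hR, ?_⟩
  have := congrArg (fun M => M.submatrix σ σ) hQ2
  simp only [Matrix.submatrix_diagonal_equiv] at this
  rw [hσ, ← this]; rfl

/-- Schur–Horn type inequality -/
lemma schur {p r : ℕ} (hr : r ≤ p) (A U V : Matrix (Fin p) (Fin p) ℝ) (l : Fin p → ℝ)
    (hl : Antitone l) (hU : U * U.transpose = 1) (hU' : U.transpose * U = 1)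
    (hV : V * V.transpose = 1) (hV' : V.transpose * V = 1)
    (hA : V.transpose * A * V = Matrix.diagonal l) :
    ∑ i ∈ Finset.univ.filter (fun i : Fin p => (i : ℕ) < r), hh ((U.transpose * A * U) i i)
      ≤ ∑ i ∈ Finset.univ.filter (fun i : Fin p => (i : ℕ) < r), hh (l i) := by
  set F := Finset.univ.filter (fun i : Fin p => (i : ℕ) < r) with hF
  obtain ⟨W, hW⟩ : ∃ W, W = U.transpose * V := ⟨_, rfl⟩
  have hWt : W.transpose = V.transpose * U := by rw [hW, Matrix.transpose_mul, Matrix.transpose_transpose]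
  have hW1 : W * W.transpose = 1 := by
    rw [hWt, hW]
    calc U.transpose * V * (V.transpose * U) = U.transpose * (V * V.transpose) * U := by
          simp only [Matrix.mul_assoc]
      _ = 1 := by rw [hV, Matrix.mul_one, hU']
  have hW2 : W.transpose * W = 1 := mul_eq_one_comm.1 hW1
  have hUA : U.transpose * A * U = W * Matrix.diagonal l * W.transpose := by
    rw [← hA, hWt, hW]
    calc U.transpose * A * U = U.transpose * 1 * A * 1 * U := by simp only [Matrix.mul_one]
      _ = _ := by rw [← hV]; simp only [Matrix.mul_assoc]
  have hrow : ∀ i, ∑ j, W i j ^ 2 = 1 := fun i => by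
    have := congrFun (congrFun hW1 i) i
    simpa [Matrix.mul_apply, sq] using this
  have hcol : ∀ j, ∑ i, W i j ^ 2 = 1 := fun j => by
    have := congrFun (congrFun hW2 j) j
    simpa [Matrix.mul_apply, sq] using this
  have hent : ∀ i, (U.transpose * A * U) i i = ∑ j, W i j ^ 2 * l j := fun i => by
    rw [hUA, Matrix.mul_apply]
    refine Finset.sum_congr rfl fun j _ => ?_
    rw [Matrix.mul_diagonal, Matrix.transpose_apply]; ring
  have hJ : ∀ i, hh ((U.transpose * A * U) i i) ≤ ∑ j, W i j ^ 2 * hh (l j) := fun i => by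
    rw [hent i]
    have := hh_convex.map_sum_le (t := Finset.univ) (w := fun j => W i j ^ 2) (p := l)
      (fun j _ => sq_nonneg _) (hrow i) (fun _ _ => Set.mem_univ _)
    simpa only [smul_eq_mul] using this
  calc ∑ i ∈ F, hh ((U.transpose * A * U) i i) ≤ ∑ i ∈ F, ∑ j, W i j ^ 2 * hh (l j) :=
        Finset.sum_le_sum fun i _ => hJ i
    _ = ∑ j, (∑ i ∈ F, W i j ^ 2) * hh (l j) := by
        rw [Finset.sum_comm]; simp only [Finset.sum_mul]
    _ ≤ _ := by
        apply weighted hr (fun j => hh (l j))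
        · exact fun a b hab => hh_mono (hl hab)
        · exact fun j => Finset.sum_nonneg fun i _ => sq_nonneg _
        · intro j
          rw [← hcol j]
          exact Finset.sum_le_sum_of_subset_of_nonneg (Finset.subset_univ _)
            (fun i _ _ => sq_nonneg _)
        · rw [Finset.sum_comm]
          simp only [hrow]
          rw [Finset.sum_const, nsmul_eq_mul, mul_one, hF, Fin.card_filter_val_lt]
          simp [hr]

open scoped MatrixOrder Matrix.Norms.L2Operator in
lemma factor {p : ℕ} (S : Matrix (Fin p) (Fin p) ℝ) (hS : S.PosSemidef) :
    ∃ B : Matrix (Fin p) (Fin p) ℝ, S = B.transpose * B := by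
  obtain ⟨B, hB⟩ := CStarAlgebra.nonneg_iff_eq_star_mul_self.mp hS.nonneg
  exact ⟨B, by rwa [Matrix.star_eq_conjTranspose,
    Matrix.conjTranspose_eq_transpose_of_trivial] at hB⟩
end DcAux

open Polynomial in
theorem f_is_dc (p r : ℕ) (hr : r ≤ p)
    (S : Matrix (Fin p) (Fin p) ℝ) (hS : S.PosSemidef)
    (hdiag : ∀ i, 0 < S i i)
    (lam : (Fin p → ℝ) → Fin p → ℝ)
    -- `lam φ` lists the eigenvalues of `Φ^{1/2} S Φ^{1/2}` in decreasing order
    (hlam : ∀ φ : Fin p → ℝ, (∀ i, 0 < φ i) →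
      (∀ i j : Fin p, i ≤ j → lam φ j ≤ lam φ i) ∧
      (Matrix.diagonal (fun i => Real.sqrt (φ i)) * S *
        Matrix.diagonal (fun i => Real.sqrt (φ i))).charpoly =
        ∏ i, (X - C (lam φ i))) :
    (∀ φ : Fin p → ℝ, (∀ i, 0 < φ i) →
      ((∑ i, (-Real.log (φ i) + S i i * φ i)) +
        ∑ i ∈ Finset.univ.filter (fun i : Fin p => (i : ℕ) < r),
          (Real.log (max 1 (lam φ i)) - max 1 (lam φ i) + 1))
      = (∑ i, (-Real.log (φ i) + S i i * φ i)) -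
          (- ∑ i ∈ Finset.univ.filter (fun i : Fin p => (i : ℕ) < r),
            (Real.log (max 1 (lam φ i)) - max 1 (lam φ i) + 1))) ∧
    ConvexOn ℝ {φ : Fin p → ℝ | ∀ i, 0 < φ i}
      (fun φ => ∑ i, (-Real.log (φ i) + S i i * φ i)) ∧
    ConvexOn ℝ {φ : Fin p → ℝ | ∀ i, 0 < φ i}
      (fun φ => - ∑ i ∈ Finset.univ.filter (fun i : Fin p => (i : ℕ) < r),
        (Real.log (max 1 (lam φ i)) - max 1 (lam φ i) + 1)) := by
  refine ⟨fun φ _ => by ring, ?_, ?_⟩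
  · have hset : Convex ℝ {φ : Fin p → ℝ | ∀ i, 0 < φ i} := by
      intro x hx y hy a b ha hb hab i
      exact (convex_Ioi (0 : ℝ)) (hx i) (hy i) ha hb hab
    refine ⟨hset, ?_⟩
    intro x hx y hy a b ha hb hab
    simp only [smul_eq_mul, Finset.mul_sum, ← Finset.sum_add_distrib]
    refine Finset.sum_le_sum fun i _ => ?_
    have h2 := strictConcaveOn_log_Ioi.concaveOn.2 (x := x i) (y := y i) (hx i) (hy i) ha hb hab
    simp only [smul_eq_mul] at h2
    simp only [Pi.add_apply, Pi.smul_apply, smul_eq_mul]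
    nlinarith
  · have hset : Convex ℝ {φ : Fin p → ℝ | ∀ i, 0 < φ i} := by
      intro x hx y hy a b ha hb hab i
      exact (convex_Ioi (0 : ℝ)) (hx i) (hy i) ha hb hab
    refine ⟨hset, ?_⟩
    obtain ⟨B, hB⟩ : ∃ B : Matrix (Fin p) (Fin p) ℝ, S = B.transpose * B := DcAux.factor S hS
    let K : (Fin p → ℝ) → Matrix (Fin p) (Fin p) ℝ := fun φ => B * Matrix.diagonal φ * B.transpose
    have hK : ∀ φ : Fin p → ℝ, (∀ i, 0 < φ i) → ∃ U : Matrix (Fin p) (Fin p) ℝ,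
        U * U.transpose = 1 ∧ U.transpose * U = 1 ∧
        U.transpose * K φ * U = Matrix.diagonal (lam φ) := by
      intro φ hφ
      apply DcAux.diagonalize
      · simp [K, Matrix.IsHermitian, Matrix.conjTranspose_eq_transpose_of_trivial,
          Matrix.transpose_mul, Matrix.mul_assoc]
      · rw [← (hlam φ hφ).2, hB]
        have hsq : Matrix.diagonal φ = Matrix.diagonal (fun i => Real.sqrt (φ i)) *
            Matrix.diagonal (fun i => Real.sqrt (φ i)) := by
          rw [Matrix.diagonal_mul_diagonal]
          congr 1; funext i; exact (Real.mul_self_sqrt (hφ i).le).symm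
        have := Matrix.charpoly_mul_comm (B * Matrix.diagonal (fun i => Real.sqrt (φ i)))
          (Matrix.diagonal (fun i => Real.sqrt (φ i)) * B.transpose)
        simp only [K]
        rw [hsq]
        simpa only [Matrix.mul_assoc] using this
    have hre : ∀ φ, - ∑ i ∈ Finset.univ.filter (fun i : Fin p => (i : ℕ) < r),
        (Real.log (max 1 (lam φ i)) - max 1 (lam φ i) + 1) =
        ∑ i ∈ Finset.univ.filter (fun i : Fin p => (i : ℕ) < r), DcAux.hh (lam φ i) := by
      intro φ
      rw [← Finset.sum_neg_distrib]
      refine Finset.sum_congr rfl fun i _ => ?_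
      unfold DcAux.hh; ring
    simp only [hre]
    intro x hx y hy a b ha hb hab
    have hz := hset hx hy ha hb hab
    obtain ⟨U, hU1, hU2, hU⟩ := hK _ hz
    obtain ⟨V, hV1, hV2, hV⟩ := hK _ hx
    obtain ⟨W, hW1, hW2, hW⟩ := hK _ hy
    have e1 := DcAux.schur hr (K x) U V (lam x) (fun i j h => (hlam x hx).1 i j h) hU1 hU2 hV1 hV2 hV
    have e2 := DcAux.schur hr (K y) U W (lam y) (fun i j h => (hlam y hy).1 i j h) hU1 hU2 hW1 hW2 hW
    have hlin : K (a • x + b • y) = a • K x + b • K y := by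
      have : Matrix.diagonal (a • x + b • y) = a • Matrix.diagonal x + b • Matrix.diagonal y := by
        rw [← Matrix.diagonal_smul, ← Matrix.diagonal_smul, Matrix.diagonal_add]; rfl
      simp only [K, this, Matrix.mul_add, Matrix.add_mul, Matrix.mul_smul, Matrix.smul_mul]
    have hent : ∀ i, lam (a • x + b • y) i =
        a * (U.transpose * K x * U) i i + b * (U.transpose * K y * U) i i := by
      intro i
      have := congrFun (congrFun hU i) i
      rw [Matrix.diagonal_apply_eq, hlin] at this
      rw [← this]
      simp only [Matrix.mul_add, Matrix.add_mul, Matrix.mul_smul, Matrix.smul_mul,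
        Matrix.add_apply, Matrix.smul_apply, smul_eq_mul]
    refine le_trans ?_ (add_le_add (mul_le_mul_of_nonneg_left e1 ha)
      (mul_le_mul_of_nonneg_left e2 hb))
    rw [Finset.mul_sum, Finset.mul_sum, ← Finset.sum_add_distrib]
    refine Finset.sum_le_sum fun i _ => ?_
    rw [hent i]
    exact DcAux.hh_convex.2 (Set.mem_univ _) (Set.mem_univ _) ha hb hab
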